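/- Let d ≥ 2 be an integer. Let f_{-1} = 1 and f_0, …, f_{d-1} be integers, and define f'_{-1} = 1 and f'_j = f_j + C(d+1, j) for 0 ≤ j ≤ d-1. With g_k(f) = Σ_{i=0}^{k} (-1)^{k-i} · C(d+2-i, d+2-k) · f_{i-1}, one has g_1(f') = g_1(f) + 1, and g_k(f') = g_k(f) for every 2 ≤ k ≤ ⌊(d+1)/2⌋. -/

import Mathlib

open Finset

/-- The `g`-numbers of a sequence `f : ℕ → ℤ` (with `f i` playing the role of `f_{i-1}`)
for a `d`-manifold: `g_k(f) = ∑_{i=0}^{k} (-1)^{k-i} C(d+2-i, d+2-k) f i`. -/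
def gVec (d : ℕ) (f : ℕ → ℤ) (k : ℕ) : ℤ :=
  ∑ i ∈ range (k + 1), (-1 : ℤ) ^ (k - i) * ((d + 2 - i).choose (d + 2 - k) : ℤ) * f i

/-! The `g`-numbers are linear in `f`, so the subdivision changes them by the `g`-numbers of the
increments `C(d+1, j)`. Since `C(n, j) C(n-j, n-m) = C(n, m) C(m, j)`, with `n = d + 1` and
`m = k - 1`, these are `C(d+1, k-1) (1 - 1)^(k-1)`. -/

theorem choose_mul_choose_sub_sub {n m j : ℕ} (hjm : j ≤ m) (hmn : m ≤ n) :
    n.choose j * (n - j).choose (n - m) = n.choose m * m.choose j := by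
  rw [Nat.choose_mul hjm, Nat.choose_symm_of_eq_add (by omega : n - j = (n - m) + (m - j))]

theorem sum_neg_one_pow_mul_choose_sub_sub_mul_choose {n m : ℕ} (hmn : m ≤ n) :
    ∑ j ∈ range (m + 1), (-1 : ℤ) ^ (m - j) * ((n - j).choose (n - m) : ℤ) * (n.choose j : ℤ) =
      if m = 0 then 1 else 0 := by
  calc
    _ = ∑ j ∈ range (m + 1), (n.choose m : ℤ) * (1 ^ j * (-1) ^ (m - j) * (m.choose j : ℤ)) := by
      refine sum_congr rfl fun j hj => ?_
      have hchoose : (n.choose j * (n - j).choose (n - m) : ℤ) = n.choose m * m.choose j :=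
        mod_cast choose_mul_choose_sub_sub (mem_range_succ_iff.mp hj) hmn
      linear_combination (-1 : ℤ) ^ (m - j) * hchoose
    _ = n.choose m * (1 + -1) ^ m := by rw [← mul_sum, add_pow]
    _ = if m = 0 then 1 else 0 := by
      rcases eq_or_ne m 0 with rfl | hm
      · simp
      · simp [hm]

/-- The change of the `f`-vector when a facet of a `d`-manifold is subdivided by one interior
vertex, with the index shift of `gVec`: the entry at `j + 1` is the change of `f_j` for `j < d`,
and the entry at `0` that of `f_{-1} = 1`. The formula is kept beyond that range, although the
change of `f_d` is `d` rather than `C(d+1, d)`. -/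
def subdivisionIncrement (d : ℕ) : ℕ → ℤ
  | 0 => 0
  | j + 1 => (d + 1).choose j

theorem gVec_add (d : ℕ) (f h : ℕ → ℤ) (k : ℕ) :
    gVec d (f + h) k = gVec d f k + gVec d h k := by
  simp only [gVec, Pi.add_apply, mul_add, sum_add_distrib]

theorem gVec_congr (d : ℕ) {f h : ℕ → ℤ} {k : ℕ} (hfh : ∀ i ≤ k, f i = h i) :
    gVec d f k = gVec d h k :=
  sum_congr rfl fun i hi => by rw [hfh i (mem_range_succ_iff.mp hi)]

theorem gVec_subdivisionIncrement_succ {d m : ℕ} (hm : m ≤ d + 1) :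
    gVec d (subdivisionIncrement d) (m + 1) = if m = 0 then 1 else 0 := by
  rw [gVec, sum_range_succ']
  simpa [subdivisionIncrement] using sum_neg_one_pow_mul_choose_sub_sub_mul_choose hm

theorem gVec_succ_of_subdivision {d m : ℕ} {f f' : ℕ → ℤ} (hm : m < d) (h0 : f' 0 = f 0)
    (hf' : ∀ j < d, f' (j + 1) = f (j + 1) + ((d + 1).choose j : ℤ)) :
    gVec d f' (m + 1) = gVec d f (m + 1) + if m = 0 then 1 else 0 := by
  have hadd : ∀ i ≤ m + 1, f' i = (f + subdivisionIncrement d) i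
    | 0, _ => by simp [subdivisionIncrement, h0]
    | j + 1, hj => hf' j (by omega)
  rw [gVec_congr d hadd, gVec_add, gVec_subdivisionIncrement_succ (by omega)]

theorem g_vector_subdivision_general {d : ℕ} (hd : 1 ≤ d) {f f' : ℕ → ℤ} (h0 : f' 0 = f 0)
    (hf' : ∀ j < d, f' (j + 1) = f (j + 1) + ((d + 1).choose j : ℤ)) :
    gVec d f' 1 = gVec d f 1 + 1 ∧ ∀ k, 2 ≤ k → k ≤ d → gVec d f' k = gVec d f k := by
  refine ⟨gVec_succ_of_subdivision hd h0 hf', fun k hk hkd => ?_⟩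
  obtain ⟨m, rfl⟩ := Nat.exists_eq_add_of_le' hk
  simpa using gVec_succ_of_subdivision hkd h0 hf'

/-- Effect of the subdivision operation on the `g`-vector: if `d ≥ 2`, `f 0 = 1 = f' 0`
(the `f_{-1}`-entries) and `f'_j = f_j + C(d+1, j)` for `0 ≤ j ≤ d-1`, then
`g₁(f') = g₁(f) + 1` and `g_k(f') = g_k(f)` for `2 ≤ k ≤ ⌊(d+1)/2⌋`. -/
theorem g_vector_subdivision (d : ℕ) (hd : 2 ≤ d) (f f' : ℕ → ℤ)
    (hfm1 : f 0 = 1) (hf'm1 : f' 0 = 1)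
    (hf' : ∀ j ≤ d - 1, f' (j + 1) = f (j + 1) + ((d + 1).choose j : ℤ)) :
    gVec d f' 1 = gVec d f 1 + 1 ∧
      ∀ k, 2 ≤ k → k ≤ (d + 1) / 2 → gVec d f' k = gVec d f k :=
  (g_vector_subdivision_general (by omega) (hf'm1.trans hfm1.symm) fun j hj =>
    hf' j (by omega)).imp_right fun h k hk hkd => h k hk (by omega)
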